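/- The iterated improper integral I₂ = ∫_{-∞}^{∞} ds₁ ∫_{-∞}^{s₁} ds₂ ∫_{-∞}^{s₂} ds₃ ∫_{-∞}^{s₃} ds₄ cos(s₁² − s₂²)·cos(s₃² − s₄²) converges and equals π²/16. -/

import Mathlib

open Real MeasureTheory Filter Topology intervalIntegral

/-!
Write `e(s) = exp(i s²)`, so that `cos (s² - t²) = ⟪e(s), e(t)⟫` for the real inner product on `ℂ`.
For an even curve `γ` the fourfold integral collapses: with `V = ∫₀ᵀ γ` and `U(s) = ∫ₛᵀ γ` it equals
`‖V‖⁴ - ∫₀ᵀ (2 ⟪γ s, U s⟫ ⟪V, U s⟫ - ⟪γ s, V⟫ ‖U s‖²) ds`. For `γ = e` the first term tends to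
`(√π / 2)⁴ = π² / 16`, and the integrand of the second is `Re (conj V * U(s)² * conj e(s))`.

Let `G(s) = ∫ₛ^∞ e`. Replacing `V` by `G(0)` and `U` by `G` costs `O(log T / T)`, because
`G(s) = O(1 / s)`. With `ω = exp(i π / 4)`, rotating the contour gives
`G(s) = ω e(s) ∫₀^∞ exp(-r² - 2 (conj ω) s r) dr`, so what is left is a constant multiple of
`Re (ω ∫₀ᵀ f)`, where `f` is entire and satisfies `f (i conj z) = conj (f z)`. This reflection
swaps the sides of the square `[0, T]²` that meet at `0`, and those that meet at `T + i T`, so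
Cauchy's theorem expresses the real part through the integral over `T + i [0, T]` alone, where
`f = O(1 / T²)`.
-/

open scoped RealInnerProductSpace ComplexConjugate

section FourfoldIntegral

variable {E : Type*} [NormedAddCommGroup E] [InnerProductSpace ℝ E] {γ δ : ℝ → E}

lemma integral_neg_left_of_even (hγ : Continuous γ) (heven : γ.Even) (a b : ℝ) :
    ∫ x in -a..b, γ x = (∫ x in 0..a, γ x) + ∫ x in 0..b, γ x := by
  have hreflect : ∫ x in -a..0, γ x = ∫ x in 0..a, γ x := by
    simpa only [heven _, neg_zero] using (integral_comp_neg (a := 0) (b := a) γ).symm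
  rw [← hreflect, integral_add_adjacent_intervals] <;> exact hγ.intervalIntegrable _ _

lemma integral_neg_self_eq_integral_add_comp_neg (hγ : Continuous γ) (a : ℝ) :
    ∫ s in -a..a, γ s = ∫ s in 0..a, (γ s + γ (-s)) := by
  rw [intervalIntegral.integral_add (hγ.intervalIntegrable _ _)
      (Continuous.intervalIntegrable (by fun_prop) _ _), integral_comp_neg, neg_zero, add_comm,
    integral_add_adjacent_intervals] <;> exact hγ.intervalIntegrable _ _

lemma norm_sq_mul_inner_add_norm_sq_mul_inner (e v u : E) :
    ‖v + (v - u)‖ ^ 2 / 2 * ⟪e, u⟫ + ‖u‖ ^ 2 / 2 * ⟪e, v + (v - u)⟫ =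
      2 * ‖v‖ ^ 2 * ⟪e, u⟫ - (2 * ⟪e, u⟫ * ⟪v, u⟫ - ⟪e, v⟫ * ‖u‖ ^ 2) := by
  rw [← add_sub_assoc, norm_sub_sq_real, inner_sub_right, inner_add_right, inner_add_left,
    ← two_smul ℝ v, norm_smul, Real.norm_ofNat]
  ring

variable [CompleteSpace E]

lemma hasDerivAt_integral_left (hγ : Continuous γ) (b s : ℝ) :
    HasDerivAt (fun t => ∫ x in t..b, γ x) (-γ s) s :=
  integral_hasDerivAt_left (hγ.intervalIntegrable s b)
    (hγ.stronglyMeasurableAtFilter volume _) hγ.continuousAt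

lemma continuous_integral_left (hγ : Continuous γ) (b : ℝ) :
    Continuous fun s => ∫ x in s..b, γ x :=
  continuous_iff_continuousAt.2 fun s => (hasDerivAt_integral_left hγ b s).continuousAt

lemma integral_inner_const_left (hγ : Continuous γ) (c : E) (a b : ℝ) :
    ∫ x in a..b, ⟪c, γ x⟫ = ⟪c, ∫ x in a..b, γ x⟫ :=
  (innerSL ℝ c).intervalIntegral_comp_comm (hγ.intervalIntegrable a b)

lemma integral_inner_integral_right_self (hγ : Continuous γ) (a b : ℝ) :
    ∫ s in a..b, ⟪γ s, ∫ x in a..s, γ x⟫ = ‖∫ x in a..b, γ x‖ ^ 2 / 2 := by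
  have hderiv (s : ℝ) : HasDerivAt (fun t => ‖∫ x in a..t, γ x‖ ^ 2 / 2)
      ⟪γ s, ∫ x in a..s, γ x⟫ s := by
    refine ((hγ.integral_hasStrictDerivAt a s).hasDerivAt.norm_sq.div_const 2).congr_deriv ?_
    rw [real_inner_comm, mul_div_cancel_left₀ _ two_ne_zero]
  rw [integral_eq_sub_of_hasDerivAt (fun s _ => hderiv s)
    (Continuous.intervalIntegrable (by fun_prop) a b)]
  simp

lemma integral_inner_integral_comm (hγ : Continuous γ) (hδ : Continuous δ) (a b : ℝ) :
    ∫ s in a..b, ⟪γ s, ∫ x in a..s, δ x⟫ = ∫ s in a..b, ⟪∫ x in s..b, γ x, δ s⟫ := by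
  have hcont := continuous_integral_left hγ b
  have hderiv (s : ℝ) : HasDerivAt (fun t => ⟪∫ x in t..b, γ x, ∫ x in a..t, δ x⟫)
      (⟪∫ x in s..b, γ x, δ s⟫ - ⟪γ s, ∫ x in a..s, δ x⟫) s := by
    refine ((hasDerivAt_integral_left hγ b s).inner ℝ
      (hδ.integral_hasStrictDerivAt a s).hasDerivAt).congr_deriv ?_
    rw [inner_neg_left, sub_eq_add_neg]
  have hparts := integral_eq_sub_of_hasDerivAt (fun s _ => hderiv s)
    (Continuous.intervalIntegrable (by fun_prop) a b)
  rw [intervalIntegral.integral_sub (Continuous.intervalIntegrable (by fun_prop) a b)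
    (Continuous.intervalIntegrable (by fun_prop) a b)] at hparts
  simp only [integral_same, inner_zero_left, inner_zero_right, sub_zero] at hparts
  exact (sub_eq_zero.1 hparts).symm

lemma integral_inner_integral_left_self (hγ : Continuous γ) (a b : ℝ) :
    ∫ s in a..b, ⟪γ s, ∫ x in s..b, γ x⟫ = ‖∫ x in a..b, γ x‖ ^ 2 / 2 := by
  simp only [← integral_inner_integral_right_self hγ, integral_inner_integral_comm hγ hγ,
    real_inner_comm]

theorem integral_simplex_inner_mul_inner (hγ : Continuous γ) (a b : ℝ) :
    ∫ s₁ in a..b, ∫ s₂ in a..s₁, ∫ s₃ in a..s₂, ∫ s₄ in a..s₃, ⟪γ s₁, γ s₂⟫ * ⟪γ s₃, γ s₄⟫ =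
      ∫ s in a..b, ‖∫ x in a..s, γ x‖ ^ 2 / 2 * ⟪γ s, ∫ x in s..b, γ x⟫ := by
  have hweighted : Continuous fun s => (‖∫ x in a..s, γ x‖ ^ 2 / 2) • γ s := by fun_prop
  calc
    _ = ∫ s₁ in a..b, ∫ s₂ in a..s₁, ⟪γ s₁, γ s₂⟫ * (‖∫ x in a..s₂, γ x‖ ^ 2 / 2) := by
      simp only [intervalIntegral.integral_const_mul, integral_inner_const_left hγ,
        integral_inner_integral_right_self hγ]
    _ = ∫ s₁ in a..b, ⟪γ s₁, ∫ s₂ in a..s₁, (‖∫ x in a..s₂, γ x‖ ^ 2 / 2) • γ s₂⟫ := by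
      simp only [← integral_inner_const_left hweighted, real_inner_smul_right, mul_comm]
    _ = ∫ s in a..b, ‖∫ x in a..s, γ x‖ ^ 2 / 2 * ⟪γ s, ∫ x in s..b, γ x⟫ := by
      rw [integral_inner_integral_comm hγ hweighted]
      simp only [real_inner_smul_right, real_inner_comm]

theorem integral_simplex_inner_mul_inner_of_even (hγ : Continuous γ) (heven : γ.Even) (a : ℝ) :
    ∫ s₁ in -a..a, ∫ s₂ in -a..s₁, ∫ s₃ in -a..s₂, ∫ s₄ in -a..s₃,
        ⟪γ s₁, γ s₂⟫ * ⟪γ s₃, γ s₄⟫ =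
      ‖∫ x in 0..a, γ x‖ ^ 4 - ∫ s in 0..a,
        (2 * ⟪γ s, ∫ x in s..a, γ x⟫ * ⟪∫ x in 0..a, γ x, ∫ x in s..a, γ x⟫ -
          ⟪γ s, ∫ x in 0..a, γ x⟫ * ‖∫ x in s..a, γ x‖ ^ 2) := by
  have hcont := continuous_integral_left hγ a
  have hleft (s : ℝ) :
      ∫ x in -a..s, γ x = (∫ x in 0..a, γ x) + ((∫ x in 0..a, γ x) - ∫ x in s..a, γ x) := by
    rw [integral_neg_left_of_even hγ heven, eq_sub_of_add_eq (integral_add_adjacent_intervals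
      (hγ.intervalIntegrable 0 s) (hγ.intervalIntegrable s a))]
  have hleft_neg (s : ℝ) : ∫ x in -a..-s, γ x = ∫ x in s..a, γ x := by
    rw [← integral_comp_neg]
    simp only [heven _]
  have hright_neg (s : ℝ) :
      ∫ x in -s..a, γ x = (∫ x in 0..a, γ x) + ((∫ x in 0..a, γ x) - ∫ x in s..a, γ x) := by
    simpa only [heven _, neg_neg, hleft] using (integral_comp_neg (a := -a) (b := s) γ).symm
  rw [integral_simplex_inner_mul_inner hγ, integral_neg_self_eq_integral_add_comp_neg (by fun_prop)]
  simp only [hleft_neg, hright_neg, heven _, hleft, norm_sq_mul_inner_add_norm_sq_mul_inner]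
  rw [intervalIntegral.integral_sub (Continuous.intervalIntegrable (by fun_prop) _ _)
    (Continuous.intervalIntegrable (by fun_prop) _ _), intervalIntegral.integral_const_mul,
    integral_inner_integral_left_self hγ]
  ring

end FourfoldIntegral

/-- Integrand of `gaussLaplace`: a half-line Gaussian with an exponential weight. -/
noncomputable def gaussLaplaceKernel (w : ℂ) (r : ℝ) : ℂ :=
  Complex.exp (-(r : ℂ) ^ 2 - 2 * w * r)

/-- Laplace transform of the half-line Gaussian, evaluated at `2 w`; the factor `2` makes it equal
to `(√π / 2) exp (w²) erfc w`. -/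
noncomputable def gaussLaplace (w : ℂ) : ℂ :=
  ∫ r in Set.Ioi (0 : ℝ), gaussLaplaceKernel w r

lemma continuous_gaussLaplaceKernel (w : ℂ) : Continuous (gaussLaplaceKernel w) := by
  unfold gaussLaplaceKernel
  fun_prop

lemma norm_gaussLaplaceKernel (w : ℂ) (r : ℝ) :
    ‖gaussLaplaceKernel w r‖ = Real.exp (-r ^ 2 - 2 * w.re * r) := by
  rw [gaussLaplaceKernel, Complex.norm_exp]
  simp [pow_two]

lemma integrable_gaussLaplaceKernel (w : ℂ) : Integrable (gaussLaplaceKernel w) := by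
  convert integrable_cexp_quadratic (b := 1) (by simp) (-2 * w) 0 using 2 with r
  simp [gaussLaplaceKernel, sub_eq_add_neg]

lemma norm_neg_two_mul_gaussLaplaceKernel_le {v w : ℂ} {r : ℝ} (hr : 0 ≤ r)
    (hvw : v.re + 1 ≤ w.re) :
    ‖-2 * r * gaussLaplaceKernel w r‖ ≤ ‖gaussLaplaceKernel v r‖ := by
  have hexp : 2 * r ≤ Real.exp (2 * r) := by linarith [Real.add_one_le_exp (2 * r)]
  have hnorm : ‖(-2 * r : ℂ)‖ = 2 * r := by simp [abs_of_nonneg hr]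
  rw [norm_mul, hnorm, norm_gaussLaplaceKernel, norm_gaussLaplaceKernel]
  calc
    2 * r * Real.exp (-r ^ 2 - 2 * w.re * r)
        ≤ Real.exp (2 * r) * Real.exp (-r ^ 2 - 2 * (v.re + 1) * r) := by gcongr
    _ = Real.exp (-r ^ 2 - 2 * v.re * r) := by rw [← Real.exp_add]; ring_nf

lemma integrableOn_neg_two_mul_gaussLaplaceKernel (w : ℂ) :
    IntegrableOn (fun r : ℝ => -2 * r * gaussLaplaceKernel w r) (Set.Ioi 0) := by
  have hcont := continuous_gaussLaplaceKernel w
  have hcont_mul : Continuous fun r : ℝ => -2 * r * gaussLaplaceKernel w r := by fun_prop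
  refine Integrable.mono (integrable_gaussLaplaceKernel (w - 1)).integrableOn
    hcont_mul.aestronglyMeasurable ?_
  filter_upwards [ae_restrict_mem measurableSet_Ioi] with r hr
  exact norm_neg_two_mul_gaussLaplaceKernel_le (le_of_lt hr) (by simp)

lemma hasDerivAt_gaussLaplace_integral (w : ℂ) :
    HasDerivAt gaussLaplace
      (∫ r in Set.Ioi (0 : ℝ), -2 * r * gaussLaplaceKernel w r) w := by
  refine (hasDerivAt_integral_of_dominated_loc_of_deriv_le
    (F' := fun v r => -2 * r * gaussLaplaceKernel v r)
    (bound := fun r => ‖gaussLaplaceKernel (w - 2) r‖) (Metric.ball_mem_nhds w one_pos)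
    (.of_forall fun v => (continuous_gaussLaplaceKernel v).aestronglyMeasurable)
    (integrable_gaussLaplaceKernel w).integrableOn
    (integrableOn_neg_two_mul_gaussLaplaceKernel w).aestronglyMeasurable ?_
    (integrable_gaussLaplaceKernel _).integrableOn.norm ?_).2
  · filter_upwards [ae_restrict_mem measurableSet_Ioi] with r hr v hv
    have hre := (abs_le.1 ((Complex.abs_re_le_norm (v - w)).trans (mem_ball_iff_norm.1 hv).le)).1
    rw [Complex.sub_re] at hre
    refine norm_neg_two_mul_gaussLaplaceKernel_le (le_of_lt hr) ?_
    rw [Complex.sub_re, Complex.re_ofNat]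
    linarith
  · refine ae_of_all _ fun r v _ => ?_
    have hexponent : HasDerivAt (fun z : ℂ => -(r : ℂ) ^ 2 - 2 * z * r) (-2 * r : ℂ) v := by
      simpa using (((hasDerivAt_id v).const_mul 2).mul_const (r : ℂ)).const_sub (-(r : ℂ) ^ 2)
    simpa only [gaussLaplaceKernel, mul_comm] using hexponent.cexp

lemma integral_neg_two_mul_gaussLaplaceKernel (w : ℂ) :
    ∫ r in Set.Ioi (0 : ℝ), -2 * r * gaussLaplaceKernel w r = 2 * w * gaussLaplace w - 1 := by
  have hderiv (r : ℝ) : HasDerivAt (gaussLaplaceKernel w)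
      (-2 * r * gaussLaplaceKernel w r - 2 * w * gaussLaplaceKernel w r) r := by
    have hid := hasDerivAt_id (r : ℂ)
    have hexponent := (hid.pow 2).neg.sub (hid.const_mul (2 * w))
    refine hexponent.cexp.comp_ofReal.congr_deriv ?_
    simp only [id_eq, Pi.sub_apply, Pi.neg_apply, Pi.pow_apply, Nat.cast_ofNat,
      Nat.add_one_sub_one, pow_one, mul_one, neg_mul, gaussLaplaceKernel]
    ring
  have hint := (integrable_gaussLaplaceKernel w).integrableOn (s := Set.Ioi 0)
  have hint_deriv := (integrableOn_neg_two_mul_gaussLaplaceKernel w).sub (hint.const_mul (2 * w))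
  have hparts := integral_Ioi_of_hasDerivAt_of_tendsto
    (continuous_gaussLaplaceKernel w).continuousWithinAt (fun r _ => hderiv r) hint_deriv
    (tendsto_zero_of_hasDerivAt_of_integrableOn_Ioi (fun r _ => hderiv r) hint_deriv hint)
  rw [MeasureTheory.integral_sub (integrableOn_neg_two_mul_gaussLaplaceKernel w)
    (hint.const_mul (2 * w)), MeasureTheory.integral_const_mul, ← gaussLaplace] at hparts
  have hzero : gaussLaplaceKernel w 0 = 1 := by simp [gaussLaplaceKernel]
  rw [hzero] at hparts
  linear_combination hparts

lemma hasDerivAt_gaussLaplace (w : ℂ) :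
    HasDerivAt gaussLaplace (2 * w * gaussLaplace w - 1) w :=
  integral_neg_two_mul_gaussLaplaceKernel w ▸ hasDerivAt_gaussLaplace_integral w

lemma differentiable_gaussLaplace : Differentiable ℂ gaussLaplace :=
  fun w => (hasDerivAt_gaussLaplace w).differentiableAt

lemma gaussLaplace_conj (w : ℂ) : gaussLaplace (conj w) = conj (gaussLaplace w) := by
  simp [gaussLaplace, gaussLaplaceKernel, ← integral_conj, ← Complex.exp_conj, Complex.conj_ofNat]

lemma gaussLaplace_zero : gaussLaplace 0 = (√π / 2 : ℝ) := by
  rw [← div_one π, ← integral_gaussian_Ioi 1, ← integral_complex_ofReal]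
  simp [gaussLaplace, gaussLaplaceKernel]

lemma norm_gaussLaplace_le {w : ℂ} (hw : 0 ≤ w.re) : ‖gaussLaplace w‖ ≤ √π / 2 := by
  rw [← div_one π, ← integral_gaussian_Ioi 1]
  refine norm_integral_le_of_norm_le (integrable_exp_neg_mul_sq one_pos).integrableOn ?_
  filter_upwards [ae_restrict_mem measurableSet_Ioi] with r hr
  rw [norm_gaussLaplaceKernel, Real.exp_le_exp]
  linarith [mul_nonneg hw (le_of_lt hr)]

lemma norm_gaussLaplace_le_inv {w : ℂ} (hw : 0 < w.re) :
    ‖gaussLaplace w‖ ≤ (2 * w.re)⁻¹ := by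
  have hneg : -(2 * w.re) < 0 := by linarith
  have hlaplace : ∫ r in Set.Ioi (0 : ℝ), Real.exp (-(2 * w.re) * r) = (2 * w.re)⁻¹ := by
    rw [integral_exp_mul_Ioi hneg, mul_zero, Real.exp_zero, neg_div_neg_eq, one_div]
  rw [← hlaplace]
  refine norm_integral_le_of_norm_le (integrableOn_exp_mul_Ioi hneg 0) (ae_of_all _ fun r => ?_)
  rw [norm_gaussLaplaceKernel, Real.exp_le_exp]
  linarith [sq_nonneg r]

/-- The primitive eighth root of unity `ω = exp(i π / 4)`, the direction along which `exp(i z²)`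
decays like a real Gaussian. -/
noncomputable def eighthRoot : ℂ := Complex.exp ((π / 4 : ℝ) * Complex.I)

local notation "ω" => eighthRoot

lemma eighthRoot_sq : ω ^ 2 = Complex.I := by
  rw [eighthRoot, ← Complex.exp_nat_mul]
  refine Eq.trans (congrArg Complex.exp ?_) Complex.exp_pi_div_two_mul_I
  push_cast
  ring

lemma norm_eighthRoot : ‖ω‖ = 1 :=
  Complex.norm_exp_ofReal_mul_I _

lemma conj_eighthRoot_mul_self : conj ω * ω = 1 := by
  rw [mul_comm, Complex.mul_conj', norm_eighthRoot, Complex.ofReal_one, one_pow]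

lemma conj_eighthRoot_mul_I : conj ω * Complex.I = ω := by
  rw [← eighthRoot_sq, sq, ← mul_assoc, conj_eighthRoot_mul_self, one_mul]

lemma eighthRoot_mul_I : ω * Complex.I = -conj ω := by
  nth_rw 1 [← conj_eighthRoot_mul_I]
  rw [mul_assoc, Complex.I_mul_I, mul_neg_one]

lemma re_conj_eighthRoot_mul (z : ℂ) : (conj ω * z).re = √2 / 2 * (z.re + z.im) := by
  simp only [eighthRoot, Complex.mul_re, Complex.conj_re, Complex.conj_im,
    Complex.exp_ofReal_mul_I_re, Complex.exp_ofReal_mul_I_im, Real.cos_pi_div_four,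
    Real.sin_pi_div_four]
  ring

lemma re_eighthRoot_mul_integral {f : ℂ → ℂ} (hf : Differentiable ℂ f)
    (hreflect : ∀ z, f (Complex.I * conj z) = conj (f z)) (R : ℝ) :
    (ω * ∫ x in 0..R, f x).re = (conj ω * ∫ y in 0..R, f (R + y * Complex.I)).re := by
  have hleft : ∫ y in 0..R, f (y * Complex.I) = conj (∫ x in 0..R, f x) := by
    simp only [← intervalIntegral_conj, ← hreflect, Complex.conj_ofReal, mul_comm]
  have htop : ∫ x in 0..R, f (x + R * Complex.I) =
      conj (∫ y in 0..R, f (R + y * Complex.I)) := by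
    rw [← intervalIntegral_conj]
    congr 1 with y
    rw [← hreflect]
    congr 1
    simp only [map_add, map_mul, Complex.conj_ofReal, Complex.conj_I]
    linear_combination y * Complex.I_sq
  have hcauchy := Complex.integral_boundary_rect_eq_zero_of_differentiableOn f 0
    (R + R * Complex.I) hf.differentiableOn
  simp only [Complex.zero_re, Complex.zero_im, Complex.add_re, Complex.add_im, Complex.ofReal_re,
    Complex.ofReal_im, Complex.re_ofReal_mul, Complex.im_ofReal_mul, Complex.I_re, Complex.I_im,
    mul_zero, mul_one, add_zero, zero_add, Complex.ofReal_zero, zero_mul, smul_eq_mul, hleft,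
    htop] at hcauchy
  set bottom := ∫ x in 0..R, f x
  set right := ∫ y in 0..R, f (R + y * Complex.I)
  have hcomplex : ω * bottom + conj (ω * bottom) = conj ω * right + conj (conj ω * right) := by
    simp only [map_mul, Complex.conj_conj]
    linear_combination ω * hcauchy + (conj bottom - right) * eighthRoot_mul_I
  rw [Complex.add_conj, Complex.add_conj] at hcomplex
  have hreal := Complex.ofReal_injective hcomplex
  linarith

/-- Entire extension of `s ↦ conj (chirp s) * (conj ω * fresnelTail s) ^ 2`; extending this product
of non-holomorphic factors is what makes Cauchy's theorem available. -/
noncomputable def contourIntegrand (z : ℂ) : ℂ :=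
  Complex.exp (Complex.I * z ^ 2) * gaussLaplace (conj ω * z) ^ 2

lemma differentiable_contourIntegrand : Differentiable ℂ contourIntegrand := by
  have := differentiable_gaussLaplace
  unfold contourIntegrand
  fun_prop

lemma contourIntegrand_I_mul_conj (z : ℂ) :
    contourIntegrand (Complex.I * conj z) = conj (contourIntegrand z) := by
  have hexponent : Complex.I * (Complex.I * conj z) ^ 2 = conj (Complex.I * z ^ 2) := by
    simp only [map_mul, map_pow, Complex.conj_I]
    linear_combination Complex.I * conj z ^ 2 * Complex.I_sq
  have hargument : conj ω * (Complex.I * conj z) = conj (conj ω * z) := by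
    rw [← mul_assoc, conj_eighthRoot_mul_I, map_mul, Complex.conj_conj]
  rw [contourIntegrand, contourIntegrand, hexponent, hargument, gaussLaplace_conj,
    Complex.exp_conj, map_mul, map_pow]

lemma norm_gaussLaplace_conj_eighthRoot_mul_le {z : ℂ} (hz : 0 < z.re + z.im) :
    ‖gaussLaplace (conj ω * z)‖ ≤ (√2 * (z.re + z.im))⁻¹ := by
  have hre : 2 * (conj ω * z).re = √2 * (z.re + z.im) := by
    rw [re_conj_eighthRoot_mul]
    ring
  rw [← hre]
  refine norm_gaussLaplace_le_inv ?_
  rw [re_conj_eighthRoot_mul]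
  positivity

lemma norm_contourIntegrand_le {z : ℂ} {R : ℝ} (hR : 0 < R) (hre : R ≤ z.re) (him : 0 ≤ z.im) :
    ‖contourIntegrand z‖ ≤ (2 * R ^ 2)⁻¹ := by
  have hexp : ‖Complex.exp (Complex.I * z ^ 2)‖ ≤ 1 := by
    rw [Complex.norm_exp, Real.exp_le_one_iff, Complex.I_mul_re, sq, Complex.mul_im]
    linarith [mul_nonneg (hR.le.trans hre) him]
  have hlaplace : ‖gaussLaplace (conj ω * z)‖ ≤ (√2 * R)⁻¹ :=
    (norm_gaussLaplace_conj_eighthRoot_mul_le (by linarith)).trans (by gcongr; linarith)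
  calc
    ‖contourIntegrand z‖ = ‖Complex.exp (Complex.I * z ^ 2)‖ * ‖gaussLaplace (conj ω * z)‖ ^ 2 := by
      rw [contourIntegrand, norm_mul, norm_pow]
    _ ≤ 1 * (√2 * R)⁻¹ ^ 2 := by gcongr
    _ = (2 * R ^ 2)⁻¹ := by rw [one_mul, inv_pow, mul_pow, Real.sq_sqrt zero_le_two]

lemma abs_re_eighthRoot_mul_integral_contourIntegrand_le {R : ℝ} (hR : 0 < R) :
    |(ω * ∫ x in 0..R, contourIntegrand x).re| ≤ (2 * R)⁻¹ := by
  rw [re_eighthRoot_mul_integral differentiable_contourIntegrand contourIntegrand_I_mul_conj]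
  calc
    _ ≤ ‖∫ y in 0..R, contourIntegrand (R + y * Complex.I)‖ := by
      refine (Complex.abs_re_le_norm _).trans_eq ?_
      rw [norm_mul, RCLike.norm_conj, norm_eighthRoot, one_mul]
    _ ≤ (2 * R ^ 2)⁻¹ * |R - 0| := by
      refine norm_integral_le_of_norm_le_const fun y hy => norm_contourIntegrand_le hR ?_ ?_
      · simp
      · rw [Set.uIoc_of_le hR.le] at hy
        simpa using hy.1.le
    _ = (2 * R)⁻¹ := by
      rw [sub_zero, abs_of_pos hR]
      field_simp

/-- The Fresnel oscillation `exp(i s²)`, a curve in `ℂ` whose inner products are the cosines of the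
problem. -/
noncomputable def chirp (s : ℝ) : ℂ := Complex.exp ((s ^ 2 : ℝ) * Complex.I)

lemma continuous_chirp : Continuous chirp := by
  unfold chirp
  fun_prop

lemma even_chirp : chirp.Even := fun s => by rw [chirp, chirp, neg_sq]

lemma norm_chirp (s : ℝ) : ‖chirp s‖ = 1 :=
  Complex.norm_exp_ofReal_mul_I _

lemma inner_chirp (s t : ℝ) : ⟪chirp s, chirp t⟫ = Real.cos (s ^ 2 - t ^ 2) := by
  rw [Complex.inner, chirp, chirp, ← Complex.exp_conj, ← Complex.exp_add, ← Real.cos_neg,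
    ← Complex.exp_ofReal_mul_I_re]
  congr 2
  simp only [Complex.ofReal_pow, map_mul, map_pow, Complex.conj_ofReal, Complex.conj_I, mul_neg,
    neg_sub, Complex.ofReal_sub]
  ring

/-- The complementary Fresnel integral `∫ₛ^∞ exp(i x²) dx`, defined by its absolutely convergent
rotated form; `hasDerivAt_fresnelTail` and `tendsto_fresnelTail` identify it. -/
noncomputable def fresnelTail (s : ℝ) : ℂ := ω * (chirp s * gaussLaplace (conj ω * s))

lemma hasDerivAt_fresnelTail (s : ℝ) : HasDerivAt fresnelTail (-chirp s) s := by
  have hchirp : HasDerivAt chirp (chirp s * (2 * s * Complex.I)) s := by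
    refine ((hasDerivAt_pow 2 s).ofReal_comp.mul_const Complex.I).cexp.congr_deriv ?_
    simp [chirp]
  have hlaplace : HasDerivAt (fun t : ℝ => gaussLaplace (conj ω * t))
      ((2 * (conj ω * s) * gaussLaplace (conj ω * s) - 1) * conj ω) s := by
    have hlinear : HasDerivAt (fun t : ℝ => conj ω * (t : ℂ)) (conj ω) s := by
      simpa using Complex.ofRealCLM.hasDerivAt.const_mul (conj ω)
    exact (hasDerivAt_gaussLaplace (conj ω * s)).comp s hlinear
  refine ((hchirp.mul hlaplace).const_mul ω).congr_deriv ?_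
  linear_combination 2 * s * chirp s * gaussLaplace (conj ω * s) * eighthRoot_mul_I +
    chirp s * (2 * s * conj ω * gaussLaplace (conj ω * s) - 1) * conj_eighthRoot_mul_self

lemma continuous_fresnelTail : Continuous fresnelTail :=
  continuous_iff_continuousAt.2 fun s => (hasDerivAt_fresnelTail s).continuousAt

lemma integral_chirp (a b : ℝ) : ∫ s in a..b, chirp s = fresnelTail a - fresnelTail b := by
  have hprimitive := integral_eq_sub_of_hasDerivAt
    (fun s _ => (hasDerivAt_fresnelTail s).neg) (by
      simpa only [neg_neg] using continuous_chirp.intervalIntegrable a b)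
  simpa only [neg_neg, Pi.neg_apply, neg_sub_neg] using hprimitive

lemma fresnelTail_zero : fresnelTail 0 = ω * (√π / 2 : ℝ) := by
  simp [fresnelTail, chirp, gaussLaplace_zero]

lemma norm_fresnelTail_eq (s : ℝ) : ‖fresnelTail s‖ = ‖gaussLaplace (conj ω * s)‖ := by
  rw [fresnelTail, norm_mul, norm_mul, norm_eighthRoot, norm_chirp, one_mul, one_mul]

lemma sqrt_pi_div_two_le_one : √π / 2 ≤ 1 := by
  rw [div_le_one two_pos, Real.sqrt_le_left two_pos.le]
  linarith [Real.pi_le_four]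

lemma norm_fresnelTail_le_one {s : ℝ} (hs : 0 ≤ s) : ‖fresnelTail s‖ ≤ 1 := by
  have hre : 0 ≤ (conj ω * s).re := by
    rw [re_conj_eighthRoot_mul, Complex.ofReal_re, Complex.ofReal_im, add_zero]
    positivity
  rw [norm_fresnelTail_eq]
  exact (norm_gaussLaplace_le hre).trans sqrt_pi_div_two_le_one

lemma norm_fresnelTail_le_inv {s : ℝ} (hs : 0 < s) : ‖fresnelTail s‖ ≤ s⁻¹ := by
  rw [norm_fresnelTail_eq]
  refine (norm_gaussLaplace_conj_eighthRoot_mul_le (by simpa using hs)).trans ?_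
  rw [Complex.ofReal_re, Complex.ofReal_im, add_zero]
  gcongr
  exact le_mul_of_one_le_left hs.le (Real.one_le_sqrt.2 one_le_two)

lemma norm_fresnelTail_le {s : ℝ} (hs : 0 ≤ s) : ‖fresnelTail s‖ ≤ 2 * (1 + s)⁻¹ := by
  have hmul : ‖fresnelTail s‖ * s ≤ 1 := by
    rcases hs.eq_or_lt with rfl | hpos
    · simp
    · exact (le_div_iff₀ hpos).1 (by simpa using norm_fresnelTail_le_inv hpos)
  rw [← div_eq_mul_inv, le_div_iff₀ (by positivity)]
  linarith [norm_fresnelTail_le_one hs]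

lemma tendsto_fresnelTail : Tendsto fresnelTail atTop (𝓝 0) :=
  squeeze_zero_norm' ((eventually_gt_atTop 0).mono fun _ => norm_fresnelTail_le_inv)
    tendsto_inv_atTop_zero

lemma tendsto_norm_integral_chirp_pow_four :
    Tendsto (fun T : ℝ => ‖∫ s in 0..T, chirp s‖ ^ 4) atTop (𝓝 (π ^ 2 / 16)) := by
  have hlimit := ((tendsto_const_nhds (x := fresnelTail 0)).sub tendsto_fresnelTail).norm.pow 4
  have hvalue : ‖fresnelTail 0 - 0‖ ^ 4 = π ^ 2 / 16 := by
    rw [sub_zero, fresnelTail_zero, norm_mul, norm_eighthRoot, one_mul, Complex.norm_real,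
      Real.norm_of_nonneg (by positivity), div_pow, show 4 = 2 * 2 by rfl, pow_mul,
      Real.sq_sqrt Real.pi_pos.le]
    norm_num
  simpa only [integral_chirp, hvalue] using hlimit

lemma conj_fresnelTail_zero_mul_sq (s : ℝ) :
    conj (fresnelTail 0) * fresnelTail s ^ 2 * conj (chirp s) =
      (√π / 2 : ℝ) * (ω * contourIntegrand s) := by
  have hchirp : chirp s * conj (chirp s) = 1 := by
    rw [Complex.mul_conj', norm_chirp, Complex.ofReal_one, one_pow]
  have hcontour : contourIntegrand s = chirp s * gaussLaplace (conj ω * s) ^ 2 := by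
    rw [contourIntegrand, chirp, Complex.ofReal_pow, mul_comm Complex.I]
  rw [fresnelTail_zero, fresnelTail, hcontour, map_mul, Complex.conj_ofReal]
  linear_combination ((√π / 2 : ℝ) : ℂ) * gaussLaplace (conj ω * s) ^ 2 * chirp s * ω *
    (chirp s * conj (chirp s) * conj_eighthRoot_mul_self + hchirp)

lemma tendsto_re_integral_conj_fresnelTail_zero_mul_sq :
    Tendsto (fun T : ℝ =>
      (∫ s in 0..T, conj (fresnelTail 0) * fresnelTail s ^ 2 * conj (chirp s)).re) atTop (𝓝 0) := by
  refine squeeze_zero_norm' (a := fun T => √π / 2 * (2 * T)⁻¹) ?_ ?_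
  · filter_upwards [eventually_gt_atTop 0] with T hT
    simp only [conj_fresnelTail_zero_mul_sq, intervalIntegral.integral_const_mul]
    rw [Complex.re_ofReal_mul, norm_mul, Real.norm_of_nonneg (by positivity), Real.norm_eq_abs]
    gcongr
    exact abs_re_eighthRoot_mul_integral_contourIntegrand_le hT
  · simpa using (tendsto_inv_atTop_zero.comp
      (tendsto_id.const_mul_atTop (zero_lt_two' ℝ))).const_mul (√π / 2)

lemma two_mul_inner_mul_inner_sub (e v u : ℂ) :
    2 * ⟪e, u⟫ * ⟪v, u⟫ - ⟪e, v⟫ * ‖u‖ ^ 2 = (conj v * u ^ 2 * conj e).re := by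
  rw [← Complex.normSq_eq_norm_sq, Complex.normSq_apply]
  simp only [Complex.inner, sq, Complex.mul_re, Complex.mul_im, Complex.conj_re, Complex.conj_im]
  ring

lemma norm_conj_sub_mul_sub_sq_sub_le {a b x : ℂ} (ha : ‖a‖ ≤ 1) (hxb : ‖x - b‖ ≤ 2) :
    ‖conj (a - b) * (x - b) ^ 2 - conj a * x ^ 2‖ ≤ ‖b‖ * (4 * ‖x‖ + 3 * ‖b‖) := by
  have htriangle : ‖x - b‖ ≤ ‖x‖ + ‖b‖ := norm_sub_le x b
  have hfactor : ‖b - 2 * x‖ ≤ ‖b‖ + 2 * ‖x‖ := by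
    simpa using norm_sub_le b (2 * x)
  calc
    _ = ‖b * (conj a * (b - 2 * x)) - conj b * ((x - b) * (x - b))‖ := by
      rw [map_sub]
      ring_nf
    _ ≤ ‖b‖ * (‖a‖ * ‖b - 2 * x‖) + ‖b‖ * (‖x - b‖ * ‖x - b‖) := by
      simpa only [norm_mul, RCLike.norm_conj] using
        norm_sub_le (b * (conj a * (b - 2 * x))) (conj b * ((x - b) * (x - b)))
    _ ≤ ‖b‖ * (1 * (‖b‖ + 2 * ‖x‖)) + ‖b‖ * (2 * (‖x‖ + ‖b‖)) := by gcongr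
    _ = ‖b‖ * (4 * ‖x‖ + 3 * ‖b‖) := by ring

lemma integral_inv_one_add {T : ℝ} (hT : 0 ≤ T) : ∫ s in 0..T, (1 + s)⁻¹ = Real.log (1 + T) := by
  rw [integral_comp_add_left fun s => s⁻¹, add_zero,
    integral_inv_of_pos one_pos (by positivity), div_one]

lemma tendsto_log_one_add_div_one_add :
    Tendsto (fun T : ℝ => Real.log (1 + T) / (1 + T)) atTop (𝓝 0) :=
  Real.isLittleO_log_id_atTop.tendsto_div_nhds_zero.comp
    (tendsto_atTop_add_const_left _ 1 tendsto_id)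

lemma norm_truncation_error_le {s T : ℝ} (hs : 0 ≤ s) (hsT : s ≤ T) :
    ‖conj (∫ x in 0..T, chirp x) * (∫ x in s..T, chirp x) ^ 2 * conj (chirp s) -
        conj (fresnelTail 0) * fresnelTail s ^ 2 * conj (chirp s)‖ ≤
      28 * (1 + T)⁻¹ * (1 + s)⁻¹ := by
  have hT : 0 ≤ T := hs.trans hsT
  have hdiff : ‖fresnelTail s - fresnelTail T‖ ≤ 2 := by
    linarith [norm_sub_le (fresnelTail s) (fresnelTail T), norm_fresnelTail_le_one hs,
      norm_fresnelTail_le_one hT]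
  rw [integral_chirp, integral_chirp, ← sub_mul, norm_mul, RCLike.norm_conj, norm_chirp, mul_one]
  calc
    _ ≤ ‖fresnelTail T‖ * (4 * ‖fresnelTail s‖ + 3 * ‖fresnelTail T‖) :=
      norm_conj_sub_mul_sub_sq_sub_le (norm_fresnelTail_le_one le_rfl) hdiff
    _ ≤ 2 * (1 + T)⁻¹ * (4 * (2 * (1 + s)⁻¹) + 3 * (2 * (1 + s)⁻¹)) := by
      gcongr
      · exact norm_fresnelTail_le hT
      · exact norm_fresnelTail_le hs
      · exact (norm_fresnelTail_le hT).trans (by gcongr)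
    _ = 28 * (1 + T)⁻¹ * (1 + s)⁻¹ := by ring

lemma tendsto_integral_truncation_error :
    Tendsto (fun T : ℝ => ∫ s in 0..T,
      (conj (∫ x in 0..T, chirp x) * (∫ x in s..T, chirp x) ^ 2 * conj (chirp s) -
        conj (fresnelTail 0) * fresnelTail s ^ 2 * conj (chirp s))) atTop (𝓝 0) := by
  refine squeeze_zero_norm' (a := fun T => 28 * (Real.log (1 + T) / (1 + T))) ?_ ?_
  · filter_upwards [eventually_ge_atTop 0] with T hT
    rw [div_eq_inv_mul, ← mul_assoc, ← integral_inv_one_add hT,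
      ← intervalIntegral.integral_const_mul]
    refine intervalIntegral.norm_integral_le_of_norm_le hT
      (ae_of_all _ fun s hs => norm_truncation_error_le hs.1.le hs.2) ?_
    refine ContinuousOn.intervalIntegrable_of_Icc hT ?_
    exact continuousOn_const.mul ((by fun_prop : ContinuousOn (fun s : ℝ => 1 + s) _).inv₀
      fun s hs => by linarith [hs.1])
  · simpa using tendsto_log_one_add_div_one_add.const_mul 28

lemma tendsto_integral_remainder :
    Tendsto (fun T : ℝ => ∫ s in 0..T,
      (2 * ⟪chirp s, ∫ x in s..T, chirp x⟫ * ⟪∫ x in 0..T, chirp x, ∫ x in s..T, chirp x⟫ -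
        ⟪chirp s, ∫ x in 0..T, chirp x⟫ * ‖∫ x in s..T, chirp x‖ ^ 2)) atTop (𝓝 0) := by
  have hchirp := continuous_chirp
  have htail := continuous_fresnelTail
  have hlimit := ((Complex.continuous_re.tendsto 0).comp tendsto_integral_truncation_error).add
    tendsto_re_integral_conj_fresnelTail_zero_mul_sq
  rw [Complex.zero_re, add_zero] at hlimit
  refine hlimit.congr fun T => ?_
  have hcont := continuous_integral_left continuous_chirp T
  have hcont_remainder : Continuous fun s =>
      conj (∫ x in 0..T, chirp x) * (∫ x in s..T, chirp x) ^ 2 * conj (chirp s) := by fun_prop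
  have hcont_main : Continuous fun s =>
      conj (fresnelTail 0) * fresnelTail s ^ 2 * conj (chirp s) := by fun_prop
  rw [Function.comp_apply, ← Complex.add_re, intervalIntegral.integral_sub
    (hcont_remainder.intervalIntegrable _ _) (hcont_main.intervalIntegrable _ _), sub_add_cancel]
  simp only [two_mul_inner_mul_inner_sub]
  exact (Complex.reCLM.intervalIntegral_comp_comm (hcont_remainder.intervalIntegrable _ _)).symm

/-- The iterated improper integral
`I₂ = ∫_{-∞}^{∞} ds₁ ∫_{-∞}^{s₁} ds₂ ∫_{-∞}^{s₂} ds₃ ∫_{-∞}^{s₃} ds₄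
      cos(s₁² − s₂²)·cos(s₃² − s₄²)`,
understood as the limit as `T → ∞` of the integral over the simplex
`{(s₁,s₂,s₃,s₄) : −T ≤ s₄ ≤ s₃ ≤ s₂ ≤ s₁ ≤ T}`, converges and equals `π²/16`. -/
theorem I2_eq_pi_sq_div_sixteen :
    Tendsto (fun T : ℝ =>
        ∫ s₁ in (-T)..T, ∫ s₂ in (-T)..s₁, ∫ s₃ in (-T)..s₂, ∫ s₄ in (-T)..s₃,
          Real.cos (s₁ ^ 2 - s₂ ^ 2) * Real.cos (s₃ ^ 2 - s₄ ^ 2))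
      atTop (𝓝 (π ^ 2 / 16)) := by
  simp only [← inner_chirp, integral_simplex_inner_mul_inner_of_even continuous_chirp even_chirp]
  simpa only [sub_zero] using
    tendsto_norm_integral_chirp_pow_four.sub tendsto_integral_remainder
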